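/- Let 0 < b < c and z, z₀ ∈ ℝ with 0 < z ≤ z₀. Then |(e^{z₀} − 1)(₁F₁(b;c;z) − 1) − (e^z − 1)(₁F₁(b;c;z₀) − 1)| ≤ ((e^{z₀} − 1)²/4) · (z/z₀). -/

import Mathlib

open Real MeasureTheory

/-- Classical Euler beta function `B(x,y) = ∫₀¹ t^(x-1) (1-t)^(y-1) dt`. -/
noncomputable def eulerBeta (x y : ℝ) : ℝ :=
  ∫ t in (0:ℝ)..1, t ^ (x - 1) * (1 - t) ^ (y - 1)

/-- `λ_{x,y} = x^x y^y / (x+y)^(x+y)`; the convention `0^0 = 1` is automatic for `rpow`. -/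
noncomputable def lam (x y : ℝ) : ℝ := x ^ x * y ^ y / (x + y) ^ (x + y)

/-- Pochhammer symbol `(x)_n = x (x+1) ⋯ (x+n-1)`. -/
noncomputable def poch (x : ℝ) (n : ℕ) : ℝ := ∏ k ∈ Finset.range n, (x + k)

/-- Confluent hypergeometric (Kummer) function `₁F₁(b;c;z)`. -/
noncomputable def oneF1 (b c z : ℝ) : ℝ :=
  ∑' n : ℕ, poch b n / poch c n * z ^ n / (Nat.factorial n : ℝ)

theorem poch_pos' (x : ℝ) (hx : 0 < x) (n : ℕ) : 0 < poch x n := by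
  unfold poch
  exact Finset.prod_pos fun k _ => by positivity

theorem ratio_mem (b c : ℝ) (hb : 0 < b) (hbc : b < c) (n : ℕ) :
    0 ≤ poch b n / poch c n ∧ poch b n / poch c n ≤ 1 := by
  have h1 := poch_pos' b hb n
  have h2 := poch_pos' c (hb.trans hbc) n
  refine ⟨by positivity, (div_le_one h2).2 ?_⟩
  unfold poch
  exact Finset.prod_le_prod (fun k _ => by positivity) fun k _ => by linarith

theorem exp_hasSum (z : ℝ) :
    HasSum (fun n : ℕ => z ^ (n + 1) / (Nat.factorial (n + 1) : ℝ)) (Real.exp z - 1) := by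
  have h : HasSum (fun n : ℕ => z ^ n / (Nat.factorial n : ℝ)) (Real.exp z) := by
    rw [Real.exp_eq_exp_ℝ]
    exact NormedSpace.expSeries_div_hasSum_exp z
  have := (hasSum_nat_add_iff' 1).2 h
  simpa using this

theorem oneF1_hasSum (b c z : ℝ) (hb : 0 < b) (hbc : b < c) (hz : 0 < z) :
    HasSum (fun n : ℕ => poch b (n + 1) / poch c (n + 1) *
      (z ^ (n + 1) / (Nat.factorial (n + 1) : ℝ))) (oneF1 b c z - 1) := by
  have hs : Summable (fun n : ℕ => poch b n / poch c n * z ^ n / (Nat.factorial n : ℝ)) := by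
    refine Summable.of_nonneg_of_le (fun n => ?_) (fun n => ?_) (Real.summable_pow_div_factorial z)
    · have := (ratio_mem b c hb hbc n).1
      positivity
    · rw [mul_div_assoc]
      exact mul_le_of_le_one_left (by positivity) (ratio_mem b c hb hbc n).2
  have := (hasSum_nat_add_iff' 1).2 hs.hasSum
  simpa [oneF1, poch, mul_div_assoc] using this

theorem gruss_aux (P F G H r : ℝ) (hr : 0 ≤ r) (hF : 0 ≤ F) (hFP : F ≤ P) (hH : 0 ≤ H)
    (hHG : H ≤ G) (hHF : H ≤ r * F) (hL : G + r * F - r * P ≤ H) :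
    |P * H - G * F| ≤ P ^ 2 / 4 * r := by
  have hP : 0 ≤ P := hF.trans hFP
  have key : r * F * (P - F) ≤ P ^ 2 / 4 * r := by
    nlinarith [mul_nonneg hr (sq_nonneg (P - 2 * F))]
  have h0 : 0 ≤ P - F := by linarith
  rw [abs_le]
  constructor
  · rcases le_total (G + r * F) (r * P) with h | h
    · nlinarith [mul_nonneg hP hH, mul_le_mul_of_nonneg_left h hF]
    · nlinarith [mul_le_mul_of_nonneg_left hL hP, mul_le_mul_of_nonneg_left h h0]
  · rcases le_total G (r * F) with h | h
    · nlinarith [mul_le_mul_of_nonneg_left hHG hP, mul_le_mul_of_nonneg_left h h0]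
    · nlinarith [mul_le_mul_of_nonneg_left hHF hP, mul_le_mul_of_nonneg_left h hF]

theorem stmt10 (b c z z₀ : ℝ) (hb : 0 < b) (hbc : b < c) (hz : 0 < z) (hzz : z ≤ z₀) :
    |(Real.exp z₀ - 1) * (oneF1 b c z - 1) - (Real.exp z - 1) * (oneF1 b c z₀ - 1)| ≤
      (Real.exp z₀ - 1) ^ 2 / 4 * (z / z₀) := by
  have hz₀ : 0 < z₀ := hz.trans_le hzz
  have sP := exp_hasSum z₀
  have sG := exp_hasSum z
  have sF := oneF1_hasSum b c z₀ hb hbc hz₀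
  have sH := oneF1_hasSum b c z hb hbc hz
  have ha := fun n : ℕ => ratio_mem b c hb hbc (n + 1)
  have hg : ∀ n : ℕ, z ^ (n + 1) / (Nat.factorial (n + 1) : ℝ) ≤
      z / z₀ * (z₀ ^ (n + 1) / (Nat.factorial (n + 1) : ℝ)) := by
    intro n
    have e : z / z₀ * (z₀ ^ (n + 1) / (Nat.factorial (n + 1) : ℝ)) =
        z * z₀ ^ n / (Nat.factorial (n + 1) : ℝ) := by
      field_simp
      ring
    rw [e, pow_succ']
    gcongr
  have hp : ∀ (x : ℝ) (n : ℕ), 0 < x → 0 ≤ x ^ (n + 1) / (Nat.factorial (n + 1) : ℝ) :=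
    fun x n hx => by positivity
  refine gruss_aux _ _ _ _ _ (by positivity) ?_ ?_ ?_ ?_ ?_ ?_
  · exact sF.nonneg fun n => mul_nonneg (ha n).1 (hp z₀ n hz₀)
  · exact hasSum_le (fun n => mul_le_of_le_one_left (hp z₀ n hz₀) (ha n).2) sF sP
  · exact sH.nonneg fun n => mul_nonneg (ha n).1 (hp z n hz)
  · exact hasSum_le (fun n => mul_le_of_le_one_left (hp z n hz) (ha n).2) sH sG
  · refine hasSum_le (fun n => ?_) sH (sF.mul_left (z / z₀))
    nlinarith [mul_le_mul_of_nonneg_left (hg n) (ha n).1]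
  · refine hasSum_le (fun n => ?_) ((sG.add (sF.mul_left (z / z₀))).sub (sP.mul_left (z / z₀))) sH
    nlinarith [mul_le_mul_of_nonneg_left (hg n) (sub_nonneg.2 (ha n).2)]
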